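/- arXiv:1205.4380 — 4 statements merged into one kernel-verified Lean document; each statement's English description precedes it below -/
import Mathlib

section
/- Let N ≥ 1 and let A be an N×N matrix over ℂ. Define the formal power series ζ_A(z) = exp(Σ_{m=1}^∞ (sum(A^m)/m) z^m) in ℂ[[z]]. Then the formal derivative of ζ_A satisfies ζ_A′(z) · det(E − A·z) = ζ_A(z) · sum(adj(E − A·z)·A) as an identity of formal power series. -/
open PowerSeries Matrix

/-- The formal exponential `exp(S) = Σ_{n=0}^∞ S^n / n!` of a formal power series `S` over `ℂ`
(with zero constant coefficient), given by its standard coefficientwise formula: since `S` has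
zero constant term, `S^n` contributes to the coefficient of `z^k` only for `n ≤ k`. -/
noncomputable def PowerSeries.expOf (S : PowerSeries ℂ) : PowerSeries ℂ :=
  PowerSeries.mk fun k =>
    ∑ n ∈ Finset.range (k + 1), (n.factorial : ℂ)⁻¹ * PowerSeries.coeff (R := ℂ) k (S ^ n)

/-!
Writing `ζ_A = exp(S)`, the chain rule gives `ζ_A′ = ζ_A · S′`, and termwise differentiation gives
`S′ = ∑ sum(A^(m+1)) z^m = sum((E - A·z)⁻¹ · A)`, the inverse being the geometric series
`∑ A^m z^m`. Multiplying by `det(E - A·z)` turns the inverse into the adjugate.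
-/

section Substitution

theorem coeff_subst_eq_sum_range {R S : Type*} [CommRing R] [CommRing S] [Algebra R S]
    {g : S⟦X⟧} (hg : constantCoeff g = 0) (f : R⟦X⟧) (k : ℕ) :
    coeff k (f.subst g) = ∑ n ∈ Finset.range (k + 1), coeff n f • coeff k (g ^ n) := by
  rw [coeff_subst' (HasSubst.of_constantCoeff_zero' hg)]
  refine finsum_eq_sum_of_support_subset _ fun n hn => ?_
  by_contra hnk
  have hkn : k < n := by simpa using hnk
  have hcoeff : coeff k (g ^ n) = 0 :=
    X_pow_dvd_iff.mp (pow_dvd_pow_of_dvd (X_dvd_iff.mpr hg) n) k hkn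
  exact hn (by simp only [hcoeff, smul_zero])

theorem expOf_eq_exp_subst {S : ℂ⟦X⟧} (hS : constantCoeff S = 0) :
    expOf S = (exp ℂ).subst S := by
  ext k
  simp [expOf, coeff_subst_eq_sum_range hS]

theorem derivative_exp_subst {R : Type*} [CommRing R] [Algebra ℚ R] {g : R⟦X⟧} (hg : HasSubst g) :
    d⁄dX R ((exp R).subst g) = (exp R).subst g * d⁄dX R g := by
  rw [derivative_subst hg, derivative_exp]

end Substitution

section GeomSeries

variable {n R : Type*} [DecidableEq n]

theorem coeff_matrix_one_apply [Semiring R] (m : ℕ) (i j : n) :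
    coeff m ((1 : Matrix n n R⟦X⟧) i j) = if m = 0 then (1 : Matrix n n R) i j else 0 := by
  rcases eq_or_ne i j with rfl | hij
  · simp [coeff_one]
  · simp [hij]

variable [Fintype n]

/-- The geometric series `∑ m, A ^ m * z ^ m` of a square matrix `A`, encoded as a matrix of power
series rather than a power series of matrices so that it can be compared with `adj(E - A·z)`. -/
def geomSeries [Semiring R] (A : Matrix n n R) : Matrix n n R⟦X⟧ :=
  Matrix.of fun i j => PowerSeries.mk fun m => (A ^ m) i j

theorem coeff_geomSeries [Semiring R] (A : Matrix n n R) (m : ℕ) (i j : n) :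
    coeff m (geomSeries A i j) = (A ^ m) i j := by
  rw [geomSeries, of_apply, coeff_mk]

theorem coeff_map_C_mul_geomSeries [Semiring R] (A : Matrix n n R) (m : ℕ) (i j : n) :
    coeff m ((A.map C * geomSeries A) i j) = (A ^ (m + 1)) i j := by
  simp [Matrix.mul_apply, pow_succ', coeff_geomSeries]

theorem coeff_geomSeries_mul_map_C [Semiring R] (A : Matrix n n R) (m : ℕ) (i j : n) :
    coeff m ((geomSeries A * A.map C) i j) = (A ^ (m + 1)) i j := by
  simp [Matrix.mul_apply, pow_succ, coeff_geomSeries]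

theorem geomSeries_eq_one_add_X_smul [Semiring R] (A : Matrix n n R) :
    geomSeries A = 1 + (X : R⟦X⟧) • (A.map C * geomSeries A) := by
  ext i j m
  rw [coeff_geomSeries, Matrix.add_apply, Matrix.smul_apply, map_add, coeff_matrix_one_apply]
  cases m with
  | zero => simp
  | succ m => simp [coeff_succ_X_mul, coeff_map_C_mul_geomSeries]

theorem one_sub_X_smul_mul_geomSeries [Ring R] (A : Matrix n n R) :
    (1 - (X : R⟦X⟧) • A.map C) * geomSeries A = 1 := by
  rw [sub_mul, one_mul, smul_mul_assoc, sub_eq_iff_eq_add]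
  exact geomSeries_eq_one_add_X_smul A

theorem adjugate_eq_det_smul_of_mul_eq_one [CommRing R] {M G : Matrix n n R} (h : M * G = 1) :
    M.adjugate = M.det • G := by
  rw [← mul_one M.adjugate, ← h, ← mul_assoc, adjugate_mul, smul_mul_assoc, one_mul]

theorem adjugate_one_sub_X_smul [CommRing R] (A : Matrix n n R) :
    (1 - (X : R⟦X⟧) • A.map C).adjugate = (1 - (X : R⟦X⟧) • A.map C).det • geomSeries A :=
  adjugate_eq_det_smul_of_mul_eq_one (one_sub_X_smul_mul_geomSeries A)

end GeomSeries

section Zeta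

variable {n R : Type*} [Fintype n]

/-- The sum `sum(M)` of all entries of a matrix. -/
def entrySum [AddCommMonoid R] (M : Matrix n n R) : R :=
  ∑ i, ∑ j, M i j

theorem entrySum_smul [NonUnitalNonAssocSemiring R] (c : R) (M : Matrix n n R) :
    entrySum (c • M) = c * entrySum M := by
  simp [entrySum, Finset.mul_sum]

variable [DecidableEq n] [CommRing R] [Algebra ℚ R]

/-- The logarithm `∑ m ≥ 1, (sum(A ^ m) / m) z ^ m` of the zeta function of `A`; its constant term
vanishes because `(0 : ℚ)⁻¹ = 0`. -/
def logZetaSeries (A : Matrix n n R) : R⟦X⟧ :=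
  PowerSeries.mk fun m => (m : ℚ)⁻¹ • entrySum (A ^ m)

/-- The zeta function `ζ_A(z) = exp(∑ m ≥ 1, (sum(A ^ m) / m) z ^ m)` of a square matrix `A`, over
an arbitrary commutative `ℚ`-algebra. -/
noncomputable def zetaSeries (A : Matrix n n R) : R⟦X⟧ :=
  (exp R).subst (logZetaSeries A)

theorem constantCoeff_logZetaSeries (A : Matrix n n R) : constantCoeff (logZetaSeries A) = 0 := by
  simp [logZetaSeries, ← coeff_zero_eq_constantCoeff_apply]

theorem derivative_logZetaSeries (A : Matrix n n R) :
    d⁄dX R (logZetaSeries A) = entrySum (geomSeries A * A.map C) := by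
  ext m
  have hcancel (r : R) : ((m + 1 : ℕ) : ℚ)⁻¹ • r * (m + 1) = r := by
    rw [smul_mul_assoc, ← Nat.cast_succ, mul_comm, ← nsmul_eq_mul, ← Nat.cast_smul_eq_nsmul ℚ,
      inv_smul_smul₀ (Nat.cast_ne_zero.mpr m.succ_ne_zero)]
  calc coeff m (d⁄dX R (logZetaSeries A))
      = ((m + 1 : ℕ) : ℚ)⁻¹ • entrySum (A ^ (m + 1)) * (m + 1) := by
        rw [coeff_derivative, logZetaSeries, coeff_mk]
    _ = entrySum (A ^ (m + 1)) := hcancel _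
    _ = coeff m (entrySum (geomSeries A * A.map C)) := by
        simp only [entrySum, map_sum, coeff_geomSeries_mul_map_C]

theorem derivative_zetaSeries (A : Matrix n n R) :
    d⁄dX R (zetaSeries A) = zetaSeries A * entrySum (geomSeries A * A.map C) := by
  rw [zetaSeries, derivative_exp_subst (.of_constantCoeff_zero' (constantCoeff_logZetaSeries A)),
    derivative_logZetaSeries]

theorem zeta_derivative_mul_det_eq_general (A : Matrix n n R) :
    d⁄dX R (zetaSeries A) * (1 - (X : R⟦X⟧) • A.map C).det =
      zetaSeries A * entrySum ((1 - (X : R⟦X⟧) • A.map C).adjugate * A.map C) := by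
  rw [derivative_zetaSeries, adjugate_one_sub_X_smul, smul_mul_assoc, entrySum_smul, mul_assoc,
    mul_comm (entrySum _)]

end Zeta

theorem logZetaSeries_eq_mk_ite {n K : Type*} [Fintype n] [DecidableEq n] [Field K] [CharZero K]
    (A : Matrix n n K) :
    logZetaSeries A =
      PowerSeries.mk fun m => if m = 0 then 0 else (∑ i, ∑ j, (A ^ m) i j) / (m : K) := by
  ext m
  rcases eq_or_ne m 0 with rfl | hm
  · simp [logZetaSeries]
  · simp [logZetaSeries, entrySum, hm, Rat.smul_def, div_eq_inv_mul]

theorem expOf_eq_zetaSeries {n : Type*} [Fintype n] [DecidableEq n] (A : Matrix n n ℂ) :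
    expOf (PowerSeries.mk fun m => if m = 0 then 0 else (∑ i, ∑ j, (A ^ m) i j) / (m : ℂ)) =
      zetaSeries A := by
  rw [← logZetaSeries_eq_mk_ite, expOf_eq_exp_subst (constantCoeff_logZetaSeries A), zetaSeries]

/-- Let `A` be an `N × N` complex matrix (`N ≥ 1`) and
`ζ_A(z) = exp(Σ_{m=1}^∞ (sum(A^m)/m) z^m)` in `ℂ⟦z⟧`. Then
`ζ_A' (z) · det(E - A·z) = ζ_A(z) · sum(adj(E - A·z)·A)` as formal power series. -/
theorem zeta_derivative_mul_det_eq
    (N : ℕ) (hN : 1 ≤ N) (A : Matrix (Fin N) (Fin N) ℂ) :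
    (PowerSeries.derivative ℂ
        (PowerSeries.expOf (PowerSeries.mk fun m =>
          if m = 0 then 0 else (∑ i, ∑ j, (A ^ m) i j) / m))) *
      Matrix.det ((1 : Matrix (Fin N) (Fin N) ℂ⟦X⟧) -
        (PowerSeries.X : ℂ⟦X⟧) • A.map (PowerSeries.C (R := ℂ))) =
    (PowerSeries.expOf (PowerSeries.mk fun m =>
        if m = 0 then 0 else (∑ i, ∑ j, (A ^ m) i j) / m)) *
      ∑ i, ∑ j, (Matrix.adjugate ((1 : Matrix (Fin N) (Fin N) ℂ⟦X⟧) -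
          (PowerSeries.X : ℂ⟦X⟧) • A.map (PowerSeries.C (R := ℂ))) * A.map (PowerSeries.C (R := ℂ))) i j := by
  rw [expOf_eq_zetaSeries]
  exact zeta_derivative_mul_det_eq_general A
end

section
/- Let N ≥ 2 and let A be an N×N matrix over ℂ. Write sum(adj(E − A·z)·A) = m_0 + m_1 z + ⋯ + m_{N−1} z^{N−1} and det(E − A·z) = d_0 + d_1 z + ⋯ + d_N z^N as polynomials in z. Then m_{N−1} = (−1)^{N+1} · N · det A and m_{N−2} = (−1)^{N−1} · sum(adj(A)) − N · d_{N−1}. -/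
open Polynomial Matrix

/-!
Since `adj (E - z • A) * (E - z • A) = det (E - z • A) • E`, expanding the second factor and summing
all entries gives `z * sum (adj (E - z • A) * A) = sum (adj (E - z • A)) - N * det (E - z • A)`.
Both claims compare coefficients, of degree `N` and `N - 1`, once the top coefficients on the right
are known. Those of the adjugate reduce to the determinant of a linear pencil: `z` times the
`(i, j)` entry of `adj (z • A + B)` is the determinant of `z • A + B` with its `j`-th row replaced
by `z • eᵢ`, which is again a pencil, with `A.updateRow j eᵢ` and `B.updateRow j 0` in place of `A`
and `B`.
-/

theorem one_sub_X_smul_map_C_eq {n R : Type*} [DecidableEq n] [Ring R] (A : Matrix n n R) :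
    1 - (X : R[X]) • A.map C = (X : R[X]) • (-A).map C + (1 : Matrix n n R).map C := by
  simp [Matrix.map_neg, sub_eq_neg_add]

section

variable {n R : Type*} [Fintype n] [DecidableEq n] [CommRing R]

theorem smul_adjugate_one_sub_smul_mul (x : R) (A : Matrix n n R) :
    x • (adjugate (1 - x • A) * A) = adjugate (1 - x • A) - (1 - x • A).det • 1 := by
  rw [← adjugate_mul, Matrix.mul_sub, Matrix.mul_one, Matrix.mul_smul, sub_sub_cancel]

theorem mul_sum_adjugate_one_sub_smul_mul (x : R) (A : Matrix n n R) :
    x * ∑ i, ∑ j, (adjugate ((1 : Matrix n n R) - x • A) * A) i j =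
      ∑ i, ∑ j, adjugate (1 - x • A) i j - Fintype.card n * (1 - x • A).det := by
  have entry (i j : n) : x * (adjugate ((1 : Matrix n n R) - x • A) * A) i j =
      adjugate (1 - x • A) i j - (1 - x • A).det * (1 : Matrix n n R) i j :=
    congrFun₂ (smul_adjugate_one_sub_smul_mul x A) i j
  simp [Finset.mul_sum, entry, Finset.sum_sub_distrib, Matrix.one_apply]

theorem X_mul_adjugate_X_add_C_apply (A B : Matrix n n R) (i j : n) :
    X * adjugate ((X : R[X]) • A.map C + B.map C) i j =
      det ((X : R[X]) • (A.updateRow j (Pi.single i 1)).map C + (B.updateRow j 0).map C) := by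
  rw [adjugate_apply, ← det_updateRow_smul]
  congr 1
  ext1 k l
  obtain rfl | hk := eq_or_ne k j
  · obtain rfl | hl := eq_or_ne l i <;> simp [*]
  · simp [hk]

theorem natDegree_adjugate_X_add_C_apply_lt (A B : Matrix n n R) (i j : n) :
    (adjugate ((X : R[X]) • A.map C + B.map C) i j).natDegree < Fintype.card n := by
  obtain h | h := eq_or_ne (adjugate ((X : R[X]) • A.map C + B.map C) i j) 0
  · rw [h, natDegree_zero]
    exact Fintype.card_pos_iff.mpr ⟨i⟩
  · have : Nontrivial R := Polynomial.nontrivial_iff.mp (nontrivial_of_ne _ _ h)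
    rw [Nat.lt_iff_add_one_le, ← natDegree_X_mul h, X_mul_adjugate_X_add_C_apply]
    exact natDegree_det_X_add_C_le _ _

theorem coeff_adjugate_X_add_C_apply_card_sub_one (A B : Matrix n n R) (i j : n) :
    (adjugate ((X : R[X]) • A.map C + B.map C) i j).coeff (Fintype.card n - 1) =
      A.adjugate i j := by
  have card_pos : 0 < Fintype.card n := Fintype.card_pos_iff.mpr ⟨i⟩
  rw [← coeff_X_mul, Nat.sub_add_cancel card_pos, X_mul_adjugate_X_add_C_apply,
    coeff_det_X_add_C_card, adjugate_apply]

theorem coeff_det_one_sub_X_smul_card (A : Matrix n n R) :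
    (1 - (X : R[X]) • A.map C).det.coeff (Fintype.card n) = (-1) ^ Fintype.card n * A.det := by
  rw [one_sub_X_smul_map_C_eq, coeff_det_X_add_C_card, det_neg]

theorem coeff_adjugate_one_sub_X_smul_apply_card (A : Matrix n n R) (i j : n) :
    (adjugate (1 - (X : R[X]) • A.map C) i j).coeff (Fintype.card n) = 0 := by
  rw [one_sub_X_smul_map_C_eq]
  exact coeff_eq_zero_of_natDegree_lt (natDegree_adjugate_X_add_C_apply_lt _ _ i j)

theorem coeff_adjugate_one_sub_X_smul_apply_card_sub_one (A : Matrix n n R) (i j : n) :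
    (adjugate (1 - (X : R[X]) • A.map C) i j).coeff (Fintype.card n - 1) =
      (-1) ^ (Fintype.card n - 1) * A.adjugate i j := by
  rw [one_sub_X_smul_map_C_eq, coeff_adjugate_X_add_C_apply_card_sub_one, ← neg_one_smul R A,
    adjugate_smul, Matrix.smul_apply, smul_eq_mul]

theorem coeff_sum_adjugate_one_sub_X_smul_mul (A : Matrix n n R) (k : ℕ) :
    (∑ i, ∑ j, (adjugate ((1 : Matrix n n R[X]) - (X : R[X]) • A.map C) * A.map C) i j).coeff k =
      ∑ i, ∑ j, (adjugate (1 - (X : R[X]) • A.map C) i j).coeff (k + 1) -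
        Fintype.card n * (1 - (X : R[X]) • A.map C).det.coeff (k + 1) := by
  rw [← coeff_X_mul, mul_sum_adjugate_one_sub_smul_mul, coeff_sub, coeff_natCast_mul]
  simp only [finsetSum_coeff]

theorem coeff_sum_adjugate_mul_one_sub_smul_general (hn : 2 ≤ Fintype.card n) (A : Matrix n n R) :
    (∑ i, ∑ j, (adjugate ((1 : Matrix n n R[X]) - (X : R[X]) • A.map C) * A.map C) i j).coeff
        (Fintype.card n - 1) =
      (-1) ^ (Fintype.card n + 1) * Fintype.card n * A.det ∧
    (∑ i, ∑ j, (adjugate ((1 : Matrix n n R[X]) - (X : R[X]) • A.map C) * A.map C) i j).coeff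
        (Fintype.card n - 2) =
      (-1) ^ (Fintype.card n - 1) * (∑ i, ∑ j, A.adjugate i j) -
        Fintype.card n * (1 - (X : R[X]) • A.map C).det.coeff (Fintype.card n - 1) := by
  constructor
  · rw [coeff_sum_adjugate_one_sub_X_smul_mul, Nat.sub_add_cancel (by lia),
      coeff_det_one_sub_X_smul_card]
    simp only [coeff_adjugate_one_sub_X_smul_apply_card, Finset.sum_const_zero]
    ring
  · rw [coeff_sum_adjugate_one_sub_X_smul_mul,
      show Fintype.card n - 2 + 1 = Fintype.card n - 1 by lia]
    simp only [coeff_adjugate_one_sub_X_smul_apply_card_sub_one, Finset.mul_sum]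

end

/-- For an `N × N` complex matrix `A` (with `N ≥ 2`), writing
`sum(adj(E - A·z)·A) = m_0 + ⋯ + m_{N-1} z^{N-1}` and `det(E - A·z) = d_0 + ⋯ + d_N z^N`,
we have `m_{N-1} = (-1)^{N+1} · N · det A` and
`m_{N-2} = (-1)^{N-1} · sum(adj A) - N · d_{N-1}`. -/
theorem coeff_sum_adjugate_mul_one_sub_smul
    (N : ℕ) (hN : 2 ≤ N) (A : Matrix (Fin N) (Fin N) ℂ) :
    (∑ i, ∑ j, (Matrix.adjugate ((1 : Matrix (Fin N) (Fin N) ℂ[X]) -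
        (Polynomial.X : ℂ[X]) • A.map Polynomial.C) * A.map Polynomial.C) i j).coeff (N - 1) =
      (-1) ^ (N + 1) * N * A.det ∧
    (∑ i, ∑ j, (Matrix.adjugate ((1 : Matrix (Fin N) (Fin N) ℂ[X]) -
        (Polynomial.X : ℂ[X]) • A.map Polynomial.C) * A.map Polynomial.C) i j).coeff (N - 2) =
      (-1) ^ (N - 1) * (∑ i, ∑ j, A.adjugate i j) -
        N * (Matrix.det ((1 : Matrix (Fin N) (Fin N) ℂ[X]) -
          (Polynomial.X : ℂ[X]) • A.map Polynomial.C)).coeff (N - 1) := by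
  simpa only [Fintype.card_fin] using
    coeff_sum_adjugate_mul_one_sub_smul_general (n := Fin N) (by simpa using hN) A
end

section
/- Let N ≥ 1 and let A be an N×N matrix over ℂ with det A ≠ 0. Suppose α_1, …, α_n are pairwise distinct nonzero complex numbers and e_1, …, e_n ≥ 1 are integers such that det(E − A·z) = (−1)^N · det A · Π_{k=1}^n (z − α_k)^{e_k} as polynomials in z, and suppose A_{k,j} (for 1 ≤ k ≤ n, 1 ≤ j ≤ e_k) are complex numbers such that for every complex z ∉ {α_1, …, α_n}: sum(adj(E − A·z)·A)/det(E − A·z) = (1/((−1)^N det A)) · Σ_{k=1}^n Σ_{j=1}^{e_k} A_{k,j}/(z − α_k)^j. Then Σ_{k=1}^n A_{k,1} = (−1)^{N+1} · N · det A; equivalently, Σ_{k=1}^n (−A_{k,1}/((−1)^N det A)) = N. -/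
open Polynomial Matrix

/-!
Everything is read off from the behaviour of `z * f z` as `z → ∞`, where `f` is the function being
decomposed. On the partial fraction side only the terms of order one survive, and they contribute
the sum of their coefficients. On the matrix side `f z` is the entry sum of `(1 - z • A)⁻¹ * A`, and
`z • (1 - z • A)⁻¹ = (z⁻¹ • 1 - A)⁻¹` tends to `-A⁻¹`, so `z * f z` tends to the entry sum of `-1`.
-/

open Filter Topology Bornology

section PartialFraction

variable {𝕜 : Type*} [NormedField 𝕜]

theorem tendsto_inv_sub_const_cobounded (a : 𝕜) :
    Tendsto (fun z => (z - a)⁻¹) (cobounded 𝕜) (𝓝 0) :=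
  tendsto_inv₀_cobounded.comp (tendsto_sub_const_cobounded a)

theorem tendsto_div_sub_const_cobounded (a : 𝕜) :
    Tendsto (fun z => z / (z - a)) (cobounded 𝕜) (𝓝 1) := by
  have hlim : Tendsto (fun z => 1 + a * (z - a)⁻¹) (cobounded 𝕜) (𝓝 1) := by
    simpa only [mul_zero, add_zero] using
      ((tendsto_inv_sub_const_cobounded a).const_mul a).const_add 1
  refine hlim.congr' ?_
  filter_upwards [eventually_ne_cobounded a] with z hz
  have : z - a ≠ 0 := sub_ne_zero.2 hz
  field_simp
  ring

theorem tendsto_mul_div_sub_pow_cobounded (a b : 𝕜) {j : ℕ} (hj : 1 ≤ j) :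
    Tendsto (fun z => z * (b / (z - a) ^ j)) (cobounded 𝕜) (𝓝 (if j = 1 then b else 0)) := by
  obtain ⟨i, rfl⟩ := Nat.exists_eq_add_of_le' hj
  have hlim := ((tendsto_div_sub_const_cobounded a).const_mul b).mul
    ((tendsto_inv_sub_const_cobounded a).pow i)
  convert hlim using 2
  · simp only [div_eq_mul_inv, pow_succ, mul_inv, inv_pow]
    ring
  · simp [zero_pow_eq]

theorem tendsto_mul_sum_div_sub_pow_cobounded {ι : Type*} [Fintype ι] (α : ι → 𝕜) {e : ι → ℕ}
    (he : ∀ k, 1 ≤ e k) (B : ι → ℕ → 𝕜) :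
    Tendsto (fun z => z * ∑ k, ∑ j ∈ Finset.Icc 1 (e k), B k j / (z - α k) ^ j)
      (cobounded 𝕜) (𝓝 (∑ k, B k 1)) := by
  have hterms := tendsto_finsetSum Finset.univ fun k _ =>
    tendsto_finsetSum (Finset.Icc 1 (e k)) fun j hj =>
      tendsto_mul_div_sub_pow_cobounded (α k) (B k j) (Finset.mem_Icc.1 hj).1
  simpa [Finset.mul_sum, he] using hterms

end PartialFraction

section Resolvent

variable {m 𝕜 : Type*} [Fintype m] [DecidableEq m]

theorem sum_adjugate_mul_div_det [Field 𝕜] (M A : Matrix m m 𝕜) :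
    (∑ i, ∑ j, (M.adjugate * A) i j) / M.det = ∑ i, ∑ j, (M⁻¹ * A) i j := by
  simp only [Matrix.inv_def, Ring.inverse_eq_inv', Matrix.smul_mul, Matrix.smul_apply, smul_eq_mul,
    ← Finset.mul_sum, div_eq_inv_mul]

theorem smul_inv_one_sub_smul [Field 𝕜] (A : Matrix m m 𝕜) {z : 𝕜} (hz : z ≠ 0) :
    z • (1 - z • A)⁻¹ = (z⁻¹ • 1 - A)⁻¹ := by
  have hinv : (z⁻¹ • (1 : Matrix m m 𝕜))⁻¹ = z • 1 :=
    Matrix.inv_eq_left_inv (by simp [smul_smul, hz])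
  have hfactor : z⁻¹ • 1 - A = (1 - z • A) * (z⁻¹ • 1) := by
    simp [smul_sub, smul_smul, hz]
  rw [hfactor, Matrix.mul_inv_rev, hinv, Matrix.smul_mul, Matrix.one_mul]

variable [NormedField 𝕜]

theorem tendsto_smul_inv_one_sub_smul_cobounded {A : Matrix m m 𝕜} (hA : A.det ≠ 0) :
    Tendsto (fun z => z • (1 - z • A)⁻¹) (cobounded 𝕜) (𝓝 (-A⁻¹)) := by
  have hdet : (-A).det ≠ 0 := by simpa [Matrix.det_neg] using hA
  have hinv : ContinuousAt Inv.inv (-A) :=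
    continuousAt_matrix_inv _ (by simpa only [Ring.inverse_eq_inv'] using continuousAt_inv₀ hdet)
  have hlim : Tendsto (fun z : 𝕜 => z⁻¹ • 1 - A) (cobounded 𝕜) (𝓝 (-A)) := by
    simpa only [zero_smul, zero_sub] using
      ((tendsto_inv₀_cobounded (α := 𝕜)).smul_const (1 : Matrix m m 𝕜)).sub_const A
  have hneg : (-A)⁻¹ = -A⁻¹ :=
    Matrix.inv_eq_left_inv (by rw [neg_mul_neg, Matrix.nonsing_inv_mul A hA.isUnit])
  rw [← hneg]
  refine (hinv.tendsto.comp hlim).congr' ?_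
  filter_upwards [eventually_ne_cobounded 0] with z hz
  exact (smul_inv_one_sub_smul A hz).symm

theorem tendsto_mul_sum_adjugate_mul_div_det_cobounded {A : Matrix m m 𝕜} (hA : A.det ≠ 0) :
    Tendsto
      (fun z => z * ((∑ i, ∑ j, ((1 - z • A).adjugate * A) i j) / (1 - z • A).det))
      (cobounded 𝕜) (𝓝 (-Fintype.card m)) := by
  have hlim : Tendsto (fun z => z • (1 - z • A)⁻¹ * A) (cobounded 𝕜) (𝓝 (-1)) := by
    have hmul := (tendsto_smul_inv_one_sub_smul_cobounded hA).mul_const A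
    rwa [neg_mul, Matrix.nonsing_inv_mul A hA.isUnit] at hmul
  have hsum : Continuous fun M : Matrix m m 𝕜 => ∑ i, ∑ j, M i j := by fun_prop
  convert (hsum.tendsto (-1)).comp hlim using 2 with z
  · simp only [sum_adjugate_mul_div_det, Function.comp_apply, Matrix.smul_mul, Matrix.smul_apply,
      smul_eq_mul, Finset.mul_sum]
  · simp [Matrix.one_apply]

end Resolvent

theorem sum_partial_fraction_residues_general {𝕜 m ι : Type*} [NontriviallyNormedField 𝕜]
    [Fintype m] [DecidableEq m] [Fintype ι] {A : Matrix m m 𝕜} (hA : A.det ≠ 0)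
    {α : ι → 𝕜} {e : ι → ℕ} (he : ∀ k, 1 ≤ e k) {B : ι → ℕ → 𝕜}
    (hpart : ∀ᶠ z in cobounded 𝕜,
      (∑ i, ∑ j, ((1 - z • A).adjugate * A) i j) / (1 - z • A).det =
        (1 / ((-1) ^ Fintype.card m * A.det)) *
          ∑ k, ∑ j ∈ Finset.Icc 1 (e k), B k j / (z - α k) ^ j) :
    (∑ k, B k 1) = (-1) ^ (Fintype.card m + 1) * Fintype.card m * A.det ∧
      (∑ k, -(B k 1) / ((-1) ^ Fintype.card m * A.det)) = Fintype.card m := by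
  set c : 𝕜 := (-1) ^ Fintype.card m * A.det with hc
  have hc₀ : c ≠ 0 := mul_ne_zero (pow_ne_zero _ (neg_ne_zero.2 one_ne_zero)) hA
  have hfractions := (tendsto_mul_sum_div_sub_pow_cobounded α he B).const_mul (1 / c)
  have hmatrix := tendsto_mul_sum_adjugate_mul_div_det_cobounded hA
  have hlim : -(Fintype.card m : 𝕜) = 1 / c * ∑ k, B k 1 := by
    refine tendsto_nhds_unique_of_eventuallyEq hmatrix hfractions ?_
    filter_upwards [hpart] with z hz
    rw [hz, mul_left_comm]
  have hsum : ∑ k, B k 1 = -Fintype.card m * c := by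
    rw [hlim]
    field_simp
  constructor
  · rw [hsum, hc]
    ring
  · rw [← Finset.sum_div, Finset.sum_neg_distrib, hsum]
    field_simp

/-- Let `A` be an `N × N` complex matrix (`N ≥ 1`) with `det A ≠ 0`. Suppose
`det(E - A·z) = (-1)^N · det A · Π_k (z - α_k)^{e_k}` with the `α_k` pairwise distinct and
nonzero and `e_k ≥ 1`, and suppose the `A_{k,j}` give a partial fraction decomposition of
`sum(adj(E - A·z)·A)/det(E - A·z)` for all `z` away from the `α_k`. Then
`Σ_k A_{k,1} = (-1)^{N+1} · N · det A`; equivalently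
`Σ_k (-A_{k,1}/((-1)^N det A)) = N`. -/
theorem sum_partial_fraction_residues
    (N n : ℕ) (hN : 1 ≤ N) (A : Matrix (Fin N) (Fin N) ℂ) (hA : A.det ≠ 0)
    (α : Fin n → ℂ) (hα : ∀ k, α k ≠ 0) (hinj : Function.Injective α)
    (e : Fin n → ℕ) (he : ∀ k, 1 ≤ e k)
    (hfact : Matrix.det ((1 : Matrix (Fin N) (Fin N) ℂ[X]) -
        (Polynomial.X : ℂ[X]) • A.map Polynomial.C) =
      Polynomial.C ((-1) ^ N * A.det) *
        ∏ k, (Polynomial.X - Polynomial.C (α k)) ^ (e k))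
    (B : Fin n → ℕ → ℂ)
    (hpart : ∀ z : ℂ, (∀ k, z ≠ α k) →
      (∑ i, ∑ j, (Matrix.adjugate ((1 : Matrix (Fin N) (Fin N) ℂ) - z • A) * A) i j) /
          Matrix.det ((1 : Matrix (Fin N) (Fin N) ℂ) - z • A) =
        (1 / ((-1) ^ N * A.det)) *
          ∑ k, ∑ j ∈ Finset.Icc 1 (e k), B k j / (z - α k) ^ j) :
    (∑ k, B k 1) = (-1) ^ (N + 1) * N * A.det ∧
      (∑ k, -(B k 1) / ((-1) ^ N * A.det)) = N := by
  have hpole : ∀ᶠ z in cobounded ℂ, ∀ k, z ≠ α k :=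
    eventually_all.2 fun k => eventually_ne_cobounded (α k)
  simpa only [Fintype.card_fin] using
    sum_partial_fraction_residues_general hA he (by simpa using hpole.mono hpart)
end

section
/- Let N ≥ 1 and let A be an N×N matrix over ℂ with det A ≠ 0. Suppose α_1, …, α_n are pairwise distinct nonzero complex numbers and e_1, …, e_n ≥ 1 are integers such that det(E − A·z) = (−1)^N · det A · Π_{k=1}^n (z − α_k)^{e_k} as polynomials in z, and suppose A_{k,j} (for 1 ≤ k ≤ n, 1 ≤ j ≤ e_k) are complex numbers such that for every complex z ∉ {α_1, …, α_n}: sum(adj(E − A·z)·A)/det(E − A·z) = (1/((−1)^N det A)) · Σ_{k=1}^n Σ_{j=1}^{e_k} A_{k,j}/(z − α_k)^j. Then Σ_{k=1}^n α_k · (−A_{k,1}/((−1)^N det A)) + (1/((−1)^N det A)) · Σ_{k=1}^n Σ_{j=1}^{e_k−1} (−1)^j · α_k^{j+1} · (Σ_{i=j}^{e_k−1} binom(i−1, j−1) · (−1)^{i−1} · (1/α_k)^{i+j} · A_{k,i+1}) = sum(A^{−1}). -/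
open Polynomial Matrix

/-!
Put `z = w⁻¹`. Since `(1 - z • A)⁻¹ * A = -w • (1 - w • A⁻¹)⁻¹`, the sum of the entries of
`A⁻¹` is, up to sign, the coefficient of `z⁻²` in the expansion at infinity of the rational
function being decomposed. A principal part `∑ j, b j / (z - a) ^ j` contributes
`a * b 1 + b 2` to that coefficient. In the double sum over `j ≤ i`, the powers of `a` combine to
`a ^ (1 - i)`, independently of `j`, and `∑ j, (-1) ^ j * (i - 1).choose (j - 1)` vanishes unless
`i = 1`, which leaves `-b 2`.
-/

section EulerCharacteristic

open Filter Topology Bornology Finset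

variable {K 𝕜 m κ : Type*} [Field K] [NontriviallyNormedField 𝕜] [Fintype m] [DecidableEq m]
  [Fintype κ]

lemma sum_adjugate_mul_div_det_s11 {l : Type*} [Fintype l] (P : Matrix m m K) (A : Matrix m l K) :
    (∑ i, ∑ j, (P.adjugate * A) i j) / P.det = ∑ i, ∑ j, (P⁻¹ * A) i j := by
  simp only [Matrix.inv_def, Ring.inverse_eq_inv', Matrix.smul_mul, Matrix.smul_apply, smul_eq_mul,
    ← mul_sum, div_eq_inv_mul]

lemma inv_one_sub_inv_smul_mul {A : Matrix m m K} (hA : IsUnit A.det) {w : K} (hw : w ≠ 0) :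
    (1 - w⁻¹ • A)⁻¹ * A = -w • (1 - w • A⁻¹)⁻¹ := by
  let u : Kˣ := -(Units.mk0 w hw)⁻¹
  have hfactor : 1 - w⁻¹ • A = (u • A) * (1 - w • A⁻¹) := by
    simp [u, Units.smul_def, mul_sub, smul_smul, hw, Matrix.mul_nonsing_inv A hA, neg_add_eq_sub]
  rw [hfactor, Matrix.mul_inv_rev, Matrix.inv_smul' A u hA, Matrix.mul_assoc, Matrix.smul_mul,
    Matrix.nonsing_inv_mul _ hA, Matrix.mul_smul, Matrix.mul_one]
  simp [u, Units.smul_def]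

lemma inv_one_sub_smul_sub_one {R : Type*} [CommRing R] {M : Matrix m m R} {w : R}
    (h : IsUnit (1 - w • M).det) :
    (1 - w • M)⁻¹ - 1 = w • (M * (1 - w • M)⁻¹) := by
  have hinv := Matrix.mul_nonsing_inv _ h
  rw [sub_mul, Matrix.one_mul, Matrix.smul_mul] at hinv
  exact sub_eq_iff_eq_add.2 (sub_eq_iff_eq_add'.1 hinv)

lemma continuousAt_inv_one_sub_smul [TopologicalSpace K] [IsTopologicalDivisionRing K]
    (M : Matrix m m K) : ContinuousAt (fun w : K => (1 - w • M)⁻¹) 0 := by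
  have hinv : ContinuousAt Inv.inv (1 - (0 : K) • M) := by
    apply continuousAt_matrix_inv
    simpa [Ring.inverse_eq_inv'] using continuousAt_inv₀ (one_ne_zero (α := K))
  exact hinv.comp (f := fun w : K => 1 - w • M) (by fun_prop)

lemma hasDerivAt_inv_one_sub_smul_apply (M : Matrix m m 𝕜) (i j : m) :
    HasDerivAt (fun w : 𝕜 => (1 - w • M)⁻¹ i j) (M i j) 0 := by
  have hdet : ∀ᶠ w : 𝕜 in 𝓝 0, (1 - w • M).det ≠ 0 :=
    ContinuousAt.eventually_ne (by fun_prop) (by simp)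
  have hlim : Tendsto (fun w : 𝕜 => (M * (1 - w • M)⁻¹) i j) (𝓝 0) (𝓝 (M i j)) := by
    have hcont : ContinuousAt (fun w : 𝕜 => (M * (1 - w • M)⁻¹) i j) 0 :=
      (continuous_apply_apply i j).continuousAt.comp
        (continuousAt_const.mul (continuousAt_inv_one_sub_smul M))
    simpa using hcont.tendsto
  rw [hasDerivAt_iff_tendsto_slope]
  refine (hlim.mono_left nhdsWithin_le_nhds).congr' ?_
  filter_upwards [hdet.filter_mono nhdsWithin_le_nhds, self_mem_nhdsWithin] with w hw hw0
  have hsub := congrFun₂ (inv_one_sub_smul_sub_one hw.isUnit) i j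
  simp only [Matrix.sub_apply, Matrix.smul_apply, smul_eq_mul] at hsub
  simp [slope_def_field, hsub, mul_div_cancel_left₀ _ (show w ≠ 0 from hw0)]

lemma div_inv_sub_pow {w : K} (hw : w ≠ 0) (a b : K) {j : ℕ} (hj : 1 ≤ j) :
    b / (w⁻¹ - a) ^ j = w * (b * (w ^ (j - 1) / (1 - a * w) ^ j)) := by
  have hfactor : w⁻¹ - a = (1 - a * w) / w := by field_simp
  rw [hfactor, div_pow, div_div_eq_mul_div, mul_div_assoc', mul_div_assoc', mul_left_comm,
    mul_pow_sub_one (Nat.one_le_iff_ne_zero.1 hj)]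

lemma hasDerivAt_pow_div_one_sub_mul_pow (a : 𝕜) (j : ℕ) :
    HasDerivAt (fun w : 𝕜 => w ^ (j - 1) / (1 - a * w) ^ j)
      ((if j = 1 then a else 0) + if j = 2 then 1 else 0) 0 := by
  have hden : HasDerivAt (fun w : 𝕜 => 1 - a * w) (-a) 0 := by
    simpa using ((hasDerivAt_id (0 : 𝕜)).const_mul a).const_sub 1
  refine ((hasDerivAt_pow (j - 1) 0).fun_div (hden.fun_pow j) (by simp)).congr_deriv ?_
  match j with
  | 0 | 1 | 2 | j + 3 => simp

lemma hasDerivAt_sum_pow_div_one_sub_mul_pow (a : 𝕜) (b : ℕ → 𝕜) {e : ℕ} (he : 1 ≤ e) :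
    HasDerivAt (fun w : 𝕜 => ∑ j ∈ Icc 1 e, b j * (w ^ (j - 1) / (1 - a * w) ^ j))
      (a * b 1 + if 2 ≤ e then b 2 else 0) 0 := by
  refine (HasDerivAt.fun_sum fun j _ =>
    (hasDerivAt_pow_div_one_sub_mul_pow a j).const_mul (b j)).congr_deriv ?_
  simp [mul_add, sum_add_distrib, he, mul_comm a]

theorem sum_inv_eq_of_partial_fractions {A : Matrix m m 𝕜} (hA : IsUnit A.det)
    (α : κ → 𝕜) {e : κ → ℕ} (he : ∀ k, 1 ≤ e k) (b : κ → ℕ → 𝕜)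
    (hb : ∀ᶠ z in cobounded 𝕜, ∑ i, ∑ j, ((1 - z • A)⁻¹ * A) i j =
      ∑ k, ∑ j ∈ Icc 1 (e k), b k j / (z - α k) ^ j) :
    ∑ i, ∑ j, A⁻¹ i j = -∑ k, (α k * b k 1 + if 2 ≤ e k then b k 2 else 0) := by
  have hleft : HasDerivAt (fun w : 𝕜 => ∑ i, ∑ j, (1 - w • A⁻¹)⁻¹ i j) (∑ i, ∑ j, A⁻¹ i j) 0 :=
    .fun_sum fun i _ => .fun_sum fun j _ => hasDerivAt_inv_one_sub_smul_apply A⁻¹ i j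
  have hright : HasDerivAt
      (fun w : 𝕜 => -∑ k, ∑ j ∈ Icc 1 (e k), b k j * (w ^ (j - 1) / (1 - α k * w) ^ j))
      (-∑ k, (α k * b k 1 + if 2 ≤ e k then b k 2 else 0)) 0 :=
    .fun_neg <| .fun_sum fun k _ => hasDerivAt_sum_pow_div_one_sub_mul_pow (α k) (b k) (he k)
  have heq : (fun w : 𝕜 => ∑ i, ∑ j, (1 - w • A⁻¹)⁻¹ i j) =ᶠ[𝓝[≠] 0]
      fun w => -∑ k, ∑ j ∈ Icc 1 (e k), b k j * (w ^ (j - 1) / (1 - α k * w) ^ j) := by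
    filter_upwards [tendsto_inv₀_nhdsNE_zero.eventually hb, self_mem_nhdsWithin] with w hw hw0
    replace hw0 : w ≠ 0 := hw0
    refine mul_left_cancel₀ (neg_ne_zero.2 hw0) ?_
    calc -w * ∑ i, ∑ j, (1 - w • A⁻¹)⁻¹ i j
        = ∑ i, ∑ j, ((1 - w⁻¹ • A)⁻¹ * A) i j := by
          simp only [inv_one_sub_inv_smul_mul hA hw0, Matrix.smul_apply, smul_eq_mul, mul_sum]
      _ = ∑ k, ∑ j ∈ Icc 1 (e k), b k j / (w⁻¹ - α k) ^ j := hw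
      _ = ∑ k, ∑ j ∈ Icc 1 (e k), w * (b k j * (w ^ (j - 1) / (1 - α k * w) ^ j)) :=
          sum_congr rfl fun k _ => sum_congr rfl fun j hj =>
            div_inv_sub_pow hw0 (α k) (b k j) (mem_Icc.1 hj).1
      _ = -w * -∑ k, ∑ j ∈ Icc 1 (e k), b k j * (w ^ (j - 1) / (1 - α k * w) ^ j) := by
          simp only [neg_mul_neg, mul_sum]
  have heq_nhds :=
    (hleft.continuousAt.eventuallyEq_nhds_iff_eventuallyEq_nhdsNE hright.continuousAt).1 heq
  exact hleft.unique (hright.congr_of_eventuallyEq heq_nhds)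

lemma sum_Icc_neg_one_pow_mul_choose {R : Type*} [Ring R] (i : ℕ) :
    ∑ j ∈ Icc 1 i, (-1 : R) ^ j * ((i - 1).choose (j - 1) : R) = if i = 1 then -1 else 0 := by
  obtain _ | m := i
  · simp
  have halt : ∑ j ∈ range (m + 1), (-1 : R) ^ j * (m.choose j : R) = if m = 0 then 1 else 0 :=
    mod_cast congrArg (Int.cast : ℤ → R) (Int.alternating_sum_range_choose (n := m))
  rw [← Ico_add_one_right_eq_Icc, sum_Ico_eq_sum_range]
  simp only [Nat.add_sub_cancel, Nat.add_sub_cancel_left, pow_add, pow_one, mul_assoc, ← mul_sum,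
    halt, Nat.add_eq_right]
  split_ifs <;> simp

lemma sum_neg_one_pow_mul_sum_choose_mul_inv_pow {a : K} (ha : a ≠ 0) (b : ℕ → K) (e : ℕ) :
    ∑ j ∈ Icc 1 (e - 1), (-1 : K) ^ j * a ^ (j + 1) *
        ∑ i ∈ Icc j (e - 1),
          ((i - 1).choose (j - 1) : K) * (-1) ^ (i - 1) * (1 / a) ^ (i + j) * b (i + 1) =
      -if 2 ≤ e then b 2 else 0 := by
  have hterm (i j : ℕ) (hi : 1 ≤ i) : (-1 : K) ^ j * a ^ (j + 1) *
      (((i - 1).choose (j - 1) : K) * (-1) ^ (i - 1) * (1 / a) ^ (i + j) * b (i + 1)) =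
      (-1) ^ j * ((i - 1).choose (j - 1) : K) *
        ((-1) ^ (i - 1) * (1 / a) ^ (i - 1) * b (i + 1)) := by
    have hpow : a ^ (j + 1) * (1 / a) ^ (i + j) = (1 / a) ^ (i - 1) := by
      rw [show i + j = (j + 1) + (i - 1) by omega, pow_add (1 / a), ← mul_assoc,
        ← mul_pow, mul_one_div_cancel ha, one_pow, one_mul]
    rw [← hpow]
    ring
  simp only [mul_sum]
  rw [sum_comm' (t' := Icc 1 (e - 1)) (s' := fun i => Icc 1 i)
    (by intro x y; simp only [mem_Icc]; omega)]
  calc _ = ∑ i ∈ Icc 1 (e - 1),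
        (if i = 1 then -1 else 0) * ((-1) ^ (i - 1) * (1 / a) ^ (i - 1) * b (i + 1)) :=
        sum_congr rfl fun i hi => by
          rw [sum_congr rfl fun j _ => hterm i j (mem_Icc.1 hi).1, ← sum_mul,
            sum_Icc_neg_one_pow_mul_choose]
    _ = -if 2 ≤ e then b 2 else 0 := by
        simp only [ite_mul, zero_mul, sum_ite_eq', mem_Icc]
        have : 1 ≤ e - 1 ↔ 2 ≤ e := by omega
        split_ifs <;> simp_all

theorem euler_characteristic_formula_general (A : Matrix m m 𝕜) (hA : A.det ≠ 0)
    (α : κ → 𝕜) (hα : ∀ k, α k ≠ 0) (e : κ → ℕ) (he : ∀ k, 1 ≤ e k) (B : κ → ℕ → 𝕜)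
    (hpart : ∀ᶠ z in cobounded 𝕜,
      (∑ i, ∑ j, ((1 - z • A).adjugate * A) i j) / (1 - z • A).det =
        1 / ((-1) ^ Fintype.card m * A.det) *
          ∑ k, ∑ j ∈ Icc 1 (e k), B k j / (z - α k) ^ j) :
    (∑ k, α k * (-(B k 1) / ((-1) ^ Fintype.card m * A.det))) +
      (1 / ((-1) ^ Fintype.card m * A.det)) *
        ∑ k, ∑ j ∈ Icc 1 (e k - 1),
          (-1 : 𝕜) ^ j * α k ^ (j + 1) *
            ∑ i ∈ Icc j (e k - 1),
              ((i - 1).choose (j - 1) : 𝕜) * (-1) ^ (i - 1) * (1 / α k) ^ (i + j) *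
                B k (i + 1) =
      ∑ i, ∑ j, A⁻¹ i j := by
  set c : 𝕜 := (-1) ^ Fintype.card m * A.det
  have hexpansion : ∀ᶠ z in cobounded 𝕜, ∑ i, ∑ j, ((1 - z • A)⁻¹ * A) i j =
      ∑ k, ∑ j ∈ Icc 1 (e k), (1 / c * B k j) / (z - α k) ^ j :=
    hpart.mono fun z hz => by
      simp only [← sum_adjugate_mul_div_det_s11, hz, mul_sum, mul_div_assoc]
  rw [sum_inv_eq_of_partial_fractions hA.isUnit α he _ hexpansion,
    sum_congr rfl fun k _ => sum_neg_one_pow_mul_sum_choose_mul_inv_pow (hα k) (B k) (e k),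
    mul_sum, ← sum_add_distrib, ← sum_neg_distrib]
  refine sum_congr rfl fun k _ => ?_
  split_ifs <;> ring

end EulerCharacteristic

/-- With the same hypotheses as in the partial fraction setup
(`det A ≠ 0`, factorization of `det(E - A·z)`, partial fraction decomposition of
`sum(adj(E - A·z)·A)/det(E - A·z)` with coefficients `A_{k,j}`), we have
`Σ_k α_k · (-A_{k,1}/((-1)^N det A))`
`+ (1/((-1)^N det A)) · Σ_k Σ_{j=1}^{e_k-1} (-1)^j α_k^{j+1} ·`
`(Σ_{i=j}^{e_k-1} binom(i-1,j-1) (-1)^{i-1} (1/α_k)^{i+j} A_{k,i+1}) = sum(A⁻¹)`. -/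
theorem euler_characteristic_formula
    (N n : ℕ) (hN : 1 ≤ N) (A : Matrix (Fin N) (Fin N) ℂ) (hA : A.det ≠ 0)
    (α : Fin n → ℂ) (hα : ∀ k, α k ≠ 0) (hinj : Function.Injective α)
    (e : Fin n → ℕ) (he : ∀ k, 1 ≤ e k)
    (hfact : Matrix.det ((1 : Matrix (Fin N) (Fin N) ℂ[X]) -
        (Polynomial.X : ℂ[X]) • A.map Polynomial.C) =
      Polynomial.C ((-1) ^ N * A.det) *
        ∏ k, (Polynomial.X - Polynomial.C (α k)) ^ (e k))
    (B : Fin n → ℕ → ℂ)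
    (hpart : ∀ z : ℂ, (∀ k, z ≠ α k) →
      (∑ i, ∑ j, (Matrix.adjugate ((1 : Matrix (Fin N) (Fin N) ℂ) - z • A) * A) i j) /
          Matrix.det ((1 : Matrix (Fin N) (Fin N) ℂ) - z • A) =
        (1 / ((-1) ^ N * A.det)) *
          ∑ k, ∑ j ∈ Finset.Icc 1 (e k), B k j / (z - α k) ^ j) :
    (∑ k, α k * (-(B k 1) / ((-1) ^ N * A.det))) +
      (1 / ((-1) ^ N * A.det)) *
        ∑ k, ∑ j ∈ Finset.Icc 1 (e k - 1),
          (-1 : ℂ) ^ j * α k ^ (j + 1) *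
            ∑ i ∈ Finset.Icc j (e k - 1),
              ((i - 1).choose (j - 1) : ℂ) * (-1) ^ (i - 1) * (1 / α k) ^ (i + j) *
                B k (i + 1) =
      ∑ i, ∑ j, A⁻¹ i j := by
  simpa only [Fintype.card_fin] using euler_characteristic_formula_general A hA α hα e he B
    ((Filter.eventually_all.2 fun k => Bornology.eventually_ne_cobounded (α k)).mono
      fun z hz => by simpa only [Fintype.card_fin] using hpart z hz)
end
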